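/- Let α ∈ C_loc^log and q ∈ 𝒫^log with 1 < q⁻ ≤ q⁺ < ∞. There are constants c₁, c₂ > 0 such that for every double sequence of complex numbers λ = {λ_{v,m}}_{v∈ℕ₀,m∈ℤⁿ}: (i) whenever for each dyadic cube Q_{v,m} (v ∈ ℕ₀, m ∈ ℤⁿ) a measurable set E_{Q_{v,m}} ⊆ Q_{v,m} with |E_{Q_{v,m}}| > |Q_{v,m}|/2 is given, one has ‖λ‖_{b̃^{α(·),q(·)}_{q(·),q(·)}} ≤ c₁ ‖ x ↦ ( Σ_{v=0}^∞ Σ_{m∈ℤⁿ} 2^{v(α(x)+n/2)q(x)} |λ_{v,m}|^{q(x)} χ_{E_{Q_{v,m}}}(x) )^{1/q(x)} ‖_∞; and (ii) if ‖λ‖_{b̃^{α(·),q(·)}_{q(·),q(·)}} < ∞ then there exists a collection of measurable sets E_{Q_{v,m}} ⊆ Q_{v,m} with |E_{Q_{v,m}}| > |Q_{v,m}|/2 for all v ∈ ℕ₀, m ∈ ℤⁿ, such that ‖ x ↦ ( Σ_{v=0}^∞ Σ_{m∈ℤⁿ} 2^{v(α(x)+n/2)q(x)} |λ_{v,m}|^{q(x)}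 χ_{E_{Q_{v,m}}}(x) )^{1/q(x)} ‖_∞ ≤ c₂ ‖λ‖_{b̃^{α(·),q(·)}_{q(·),q(·)}}. -/

import Mathlib

/-!
Write `t_{v,m}(x) = 2 ^ (v (α(x) + n/2) q(x)) (|λ_{v,m}| / μ) ^ q(x)`. In terms of modulars, the norm
of `b̃` is at most `μ` iff `∫_P Σ_{v ≥ v_P} Σ_m t_{v,m} χ_{v,m} ≤ |P|` for all dyadic cubes `P`, and
the `L^∞` norm is at most `μ` iff `Σ_{v,m} t_{v,m} χ_{E_{v,m}} ≤ 1` almost everywhere.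

For the first estimate, `t_{v,m} ≤ 1` almost everywhere on `E_{v,m}`. If `x, y` lie in the same cube
`Q_{v,m}` and `t_{v,m}(y) ≤ 1`, the local log-Hölder conditions on `α` and `1/q` bound
`v |α(x) - α(y)|` and `v |1/q(x) - 1/q(y)|`, and yield `t_{v,m}(x) ≤ C t_{v,m}(y) + 2 ^ (-v)`: the
error term takes care of the case in which the base is smaller than `2 ^ (-v)`, where changing the
exponent `q` is not harmless (`coeffTerm_le`). Averaging over `y ∈ E_{v,m}` and integrating over
`x ∈ Q_{v,m}` gives `∫_Q t ≤ 2 C ∫_E t + 2 ^ (-v) |Q|` (`setLIntegral_coeffTerm_le`), and summing over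
the cubes inside `P` bounds the mean over `P` by `2 C + 2` (`setLIntegral_levelSum_le`). As `q ≥ 1`,
this constant can be moved inside the modular.

For the second estimate, let `E_Q` be the set of points of `Q` at which the series truncated to
levels `v ≥ v_Q` is at most `3`. By Chebyshev's inequality `|E_Q| ≥ 2 |Q| / 3`, and looking at the
largest cube `Q` with `x ∈ E_Q` shows that the series over the sets `E_Q` is at most `3` at every
point `x` (`exists_sets_levelSum_le`). This part is applied with `μ` twice the norm; when the norm
is zero the series vanishes almost everywhere and the full cubes can be taken.
-/

noncomputable section
open MeasureTheory ENNReal Set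
open scoped ENNReal

abbrev Rn (n : ℕ) := EuclideanSpace ℝ (Fin n)

/-- The dyadic cube `Q_{v,m}` (with `v ∈ ℕ₀`, so `|Q_{v,m}| = 2^{-vn} ≤ 1`). -/
def dyadicCube (n : ℕ) (v : ℕ) (m : Fin n → ℤ) : Set (Rn n) :=
  {x | ∀ i, (m i : ℝ) ≤ 2 ^ v * x i ∧ 2 ^ v * x i < m i + 1}

/-- The variable-exponent modular `ϱ_{p(·)}`. -/
def modularVE (n : ℕ) (p : Rn n → ℝ) (f : Rn n → ℝ≥0∞) : ℝ≥0∞ :=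
  ∫⁻ x, f x ^ p x

/-- The Luxemburg norm `‖·‖_{p(·)}`. -/
def luxNorm (n : ℕ) (p : Rn n → ℝ) (f : Rn n → ℝ≥0∞) : ℝ≥0∞ :=
  sInf {μ : ℝ≥0∞ | 0 < μ ∧ modularVE n p (fun x => f x / μ) ≤ 1}

/-- Local log-Hölder continuity with constant `c`. -/
def LocLogHolderWith (n : ℕ) (c : ℝ) (g : Rn n → ℝ) : Prop :=
  ∀ x y : Rn n, x ≠ y → |g x - g y| ≤ c / Real.log (Real.exp 1 + 1 / ‖x - y‖)

/-- The log-Hölder decay condition. -/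
def LogHolderDecay (n : ℕ) (g : Rn n → ℝ) : Prop :=
  ∃ g_inf c : ℝ, 0 < c ∧ ∀ x : Rn n, |g x - g_inf| ≤ c / Real.log (Real.exp 1 + ‖x‖)

/-- Global log-Hölder continuity. -/
def GlobLogHolder (n : ℕ) (g : Rn n → ℝ) : Prop :=
  (∃ c : ℝ, 0 < c ∧ LocLogHolderWith n c g) ∧ LogHolderDecay n g

/-- The sequence space norm `‖λ‖_{b̃^{β(·),r(·)}_{r(·),r(·)}}`: the supremum over dyadic
cubes `P = Q_{vP,m0}` with `|P| ≤ 1` of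
`‖ x ↦ ( |P|^{-1} Σ_{v≥v_P} Σ_m 2^{v(β(x)+n/2)r(x)} |λ_{v,m}|^{r(x)} χ_{v,m}(x) )^{1/r(x)} χ_P ‖_{r(·)}`;
here `|P|^{-1} = 2^{vP·n}`. -/
def btNorm (n : ℕ) (r β : Rn n → ℝ) (lam : ℕ → (Fin n → ℤ) → ℂ) : ℝ≥0∞ :=
  ⨆ (vP : ℕ) (m0 : Fin n → ℤ),
    luxNorm n r ((dyadicCube n vP m0).indicator fun x =>
      ((2 : ℝ≥0∞) ^ ((vP : ℝ) * n) *
        ∑' (v : ℕ), ∑' (m : Fin n → ℤ),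
          (if vP ≤ v then (1 : ℝ≥0∞) else 0) *
            (2 : ℝ≥0∞) ^ ((v : ℝ) * (β x + n / 2) * r x) *
              ENNReal.ofReal ‖lam v m‖ ^ r x *
                (dyadicCube n v m).indicator (fun _ => (1 : ℝ≥0∞)) x) ^ (1 / r x))

/-- `‖ x ↦ ( Σ_v Σ_m 2^{v(β(x)+n/2)r(x)} |λ_{v,m}|^{r(x)} χ_{E_{Q_{v,m}}}(x) )^{1/r(x)} ‖_∞`. -/
def eNormInf (n : ℕ) (r β : Rn n → ℝ) (lam : ℕ → (Fin n → ℤ) → ℂ)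
    (E : ℕ → (Fin n → ℤ) → Set (Rn n)) : ℝ≥0∞ :=
  essSup (fun x =>
    (∑' (v : ℕ), ∑' (m : Fin n → ℤ),
      (2 : ℝ≥0∞) ^ ((v : ℝ) * (β x + n / 2) * r x) *
        ENNReal.ofReal ‖lam v m‖ ^ r x *
          (E v m).indicator (fun _ => (1 : ℝ≥0∞)) x) ^ (1 / r x))
    (volume : Measure (Rn n))

/-! ### Dyadic cubes -/

lemma dyadicCube_eq_preimage (n v : ℕ) (m : Fin n → ℤ) :
    dyadicCube n v m = (WithLp.ofLp : Rn n → Fin n → ℝ) ⁻¹'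
      (Set.pi Set.univ fun i => Set.Ico ((m i : ℝ) / 2 ^ v) (((m i : ℝ) + 1) / 2 ^ v)) := by
  ext x
  have h2 : (0 : ℝ) < 2 ^ v := by positivity
  simp only [dyadicCube, Set.mem_ofPred_eq, Set.mem_preimage, Set.mem_pi, Set.mem_univ,
    true_imp_iff, Set.mem_Ico, div_le_iff₀ h2, lt_div_iff₀ h2, mul_comm]

lemma measurableSet_dyadicCube (n v : ℕ) (m : Fin n → ℤ) :
    MeasurableSet (dyadicCube n v m) := by
  rw [dyadicCube_eq_preimage]
  exact (MeasurableSet.univ_pi fun i => measurableSet_Ico).preimage (by fun_prop)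

lemma volume_dyadicCube (n v : ℕ) (m : Fin n → ℤ) :
    volume (dyadicCube n v m) = (2 : ℝ≥0∞) ^ (-((v : ℝ) * n)) := by
  rw [dyadicCube_eq_preimage, (PiLp.volume_preserving_ofLp (Fin n)).measure_preimage
    (MeasurableSet.univ_pi fun i => measurableSet_Ico).nullMeasurableSet, Real.volume_pi_Ico]
  have h : ∀ i : Fin n, ENNReal.ofReal (((m i : ℝ) + 1) / 2 ^ v - (m i : ℝ) / 2 ^ v)
      = (2 : ℝ≥0∞) ^ (-(v : ℝ)) := by
    intro i
    rw [← sub_div, add_sub_cancel_left, ENNReal.rpow_neg, ENNReal.rpow_natCast, one_div,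
      ENNReal.ofReal_inv_of_pos (by positivity), ENNReal.ofReal_pow (by norm_num)]
    norm_num
  rw [Finset.prod_congr rfl fun i _ => h i, Finset.prod_const, Finset.card_univ, Fintype.card_fin,
    ← ENNReal.rpow_natCast, ← ENNReal.rpow_mul, neg_mul]

lemma two_rpow_mul_volume_dyadicCube (n v : ℕ) (m : Fin n → ℤ) :
    (2 : ℝ≥0∞) ^ ((v : ℝ) * n) * volume (dyadicCube n v m) = 1 := by
  rw [volume_dyadicCube, ← ENNReal.rpow_add _ _ (by norm_num) (by norm_num), add_neg_cancel,
    ENNReal.rpow_zero]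

lemma volume_dyadicCube_ne_top (n v : ℕ) (m : Fin n → ℤ) :
    volume (dyadicCube n v m) ≠ ⊤ := by
  rw [volume_dyadicCube]
  exact ENNReal.rpow_ne_top_of_ne_zero (by norm_num) (by norm_num)

lemma volume_dyadicCube_ne_zero (n v : ℕ) (m : Fin n → ℤ) :
    volume (dyadicCube n v m) ≠ 0 := by
  intro h
  have := two_rpow_mul_volume_dyadicCube n v m
  rw [h, mul_zero] at this
  exact zero_ne_one this

lemma dyadicCube_unique {n v : ℕ} {m m' : Fin n → ℤ} {x : Rn n}
    (h : x ∈ dyadicCube n v m) (h' : x ∈ dyadicCube n v m') : m = m' := by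
  ext i
  have h1 : (m i : ℝ) < m' i + 1 := (h i).1.trans_lt (h' i).2
  have h2 : (m' i : ℝ) < m i + 1 := (h' i).1.trans_lt (h i).2
  norm_cast at h1 h2
  omega

/-- Dyadic cubes are nested: a smaller cube meeting a larger one is contained in it. -/
lemma dyadicCube_subset {n v w : ℕ} (hvw : v ≤ w) {m k : Fin n → ℤ} {x : Rn n}
    (h : x ∈ dyadicCube n v m) (h' : x ∈ dyadicCube n w k) :
    dyadicCube n w k ⊆ dyadicCube n v m := by
  obtain ⟨j, rfl⟩ := Nat.exists_eq_add_of_le hvw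
  intro y hy i
  obtain ⟨a1, a2⟩ := h i
  obtain ⟨b1, b2⟩ := h' i
  obtain ⟨c1, c2⟩ := hy i
  have h2 : (0 : ℝ) < 2 ^ j := by positivity
  rw [pow_add] at b1 b2 c1 c2
  have e1 : (m i : ℝ) * 2 ^ j < k i + 1 := by nlinarith
  have e2 : (k i : ℝ) < (m i + 1) * 2 ^ j := by nlinarith
  have e1' : (m i : ℝ) * 2 ^ j ≤ k i := by
    norm_cast at e1 ⊢
    push_cast at e1 ⊢
    omega
  have e2' : (k i : ℝ) + 1 ≤ (m i + 1) * 2 ^ j := by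
    norm_cast at e2 ⊢
  constructor
  · nlinarith
  · nlinarith

lemma norm_sub_le_of_mem_dyadicCube {n v : ℕ} {m : Fin n → ℤ} {x y : Rn n}
    (hx : x ∈ dyadicCube n v m) (hy : y ∈ dyadicCube n v m) :
    ‖x - y‖ ≤ n / 2 ^ v := by
  have h2 : (0 : ℝ) < 2 ^ v := by positivity
  have hc : ∀ i, ‖(x - y) i‖ ≤ 1 / 2 ^ v := by
    intro i
    obtain ⟨a1, a2⟩ := hx i
    obtain ⟨b1, b2⟩ := hy i
    rw [le_div_iff₀ h2, Real.norm_eq_abs, PiLp.sub_apply, ← abs_of_pos h2, ← abs_mul, abs_le]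
    constructor <;> nlinarith
  rw [EuclideanSpace.norm_eq]
  have hs : ∑ i, ‖(x - y) i‖ ^ 2 ≤ ((n : ℝ) / 2 ^ v) ^ 2 := by
    calc ∑ i, ‖(x - y) i‖ ^ 2 ≤ ∑ _i : Fin n, (1 / 2 ^ v : ℝ) ^ 2 := by
          gcongr with i
          exact hc i
      _ = n * (1 / 2 ^ v : ℝ) ^ 2 := by simp
      _ ≤ (n : ℝ) ^ 2 * (1 / 2 ^ v : ℝ) ^ 2 := by
          gcongr
          exact_mod_cast Nat.le_self_pow two_ne_zero n
      _ = _ := by ring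
  exact Real.sqrt_le_iff.2 ⟨by positivity, hs⟩

/-- On a dyadic cube of side `2 ^ (-v)` a locally log-Hölder continuous function oscillates by at
most `O(1 / v)`. -/
lemma exists_osc_bound {n : ℕ} (hn : 1 ≤ n) {c : ℝ} (hc : 0 < c) {g : Rn n → ℝ}
    (hg : LocLogHolderWith n c g) :
    ∃ K : ℝ, 0 ≤ K ∧ ∀ (v : ℕ) (m : Fin n → ℤ), ∀ x ∈ dyadicCube n v m, ∀ y ∈ dyadicCube n v m,
      (v : ℝ) * |g x - g y| ≤ K := by
  have hn' : (1 : ℝ) ≤ n := by exact_mod_cast hn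
  have hlog2 : 0 < Real.log 2 := Real.log_pos (by norm_num)
  have hlogn : 0 ≤ Real.log n := Real.log_nonneg hn'
  refine ⟨c * ((1 + Real.log n) / Real.log 2), by positivity, fun v m x hx y hy => ?_⟩
  rcases eq_or_ne x y with rfl | hxy
  · simp only [sub_self, abs_zero, mul_zero]
    positivity
  have h2 : (0 : ℝ) < 2 ^ v := by positivity
  have hpos : 0 < ‖x - y‖ := norm_pos_iff.2 (sub_ne_zero.2 hxy)
  have hr : (2 : ℝ) ^ v / n ≤ 1 / ‖x - y‖ := by
    rw [← one_div_div]
    exact one_div_le_one_div_of_le hpos (norm_sub_le_of_mem_dyadicCube hx hy)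
  set L := Real.log (Real.exp 1 + 1 / ‖x - y‖) with hL
  have hL1 : 1 ≤ L := by
    rw [hL, Real.le_log_iff_exp_le (by positivity)]
    have : 0 < 1 / ‖x - y‖ := by positivity
    linarith
  have hL2 : v * Real.log 2 - Real.log n ≤ L := by
    rw [← Real.log_pow, ← Real.log_div (by positivity) (by positivity)]
    apply Real.log_le_log (by positivity)
    have := Real.exp_pos 1
    linarith
  have hv : (v : ℝ) ≤ L * ((1 + Real.log n) / Real.log 2) := by
    rw [← mul_div_assoc, le_div_iff₀ hlog2]
    nlinarith
  calc (v : ℝ) * |g x - g y| ≤ v * (c / L) := by gcongr; exact hg x y hxy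
    _ ≤ L * ((1 + Real.log n) / Real.log 2) * (c / L) := by gcongr
    _ = c * ((1 + Real.log n) / Real.log 2) := by
      field_simp

/-! ### The sequence-space series -/

/-- The single term `2 ^ (v (α(x) + n/2) q(x)) * l ^ q(x)` of the series defining the norms,
for a coefficient of modulus `l`. -/
def coeffTerm (n : ℕ) (q α : Rn n → ℝ) (v : ℕ) (l : ℝ≥0∞) (x : Rn n) : ℝ≥0∞ :=
  (2 : ℝ≥0∞) ^ ((v : ℝ) * (α x + n / 2) * q x) * l ^ q x

/-- The series `Σ_{v ≥ k} Σ_m 2 ^ (v (α(x) + n/2) q(x)) a_{v,m} ^ q(x) χ_{E_{v,m}}(x)`. -/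
def levelSum (n : ℕ) (q α : Rn n → ℝ) (a : ℕ → (Fin n → ℤ) → ℝ≥0∞)
    (E : ℕ → (Fin n → ℤ) → Set (Rn n)) (k : ℕ) (x : Rn n) : ℝ≥0∞ :=
  ∑' (v : ℕ), ∑' (m : Fin n → ℤ), (if k ≤ v then (1 : ℝ≥0∞) else 0) *
    (coeffTerm n q α v (a v m) x * (E v m).indicator (fun _ => (1 : ℝ≥0∞)) x)

section
variable {n : ℕ} {q α : Rn n → ℝ}

lemma measurable_coeffTerm (hq : Measurable q) (hα : Measurable α) (v : ℕ) (l : ℝ≥0∞) :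
    Measurable (coeffTerm n q α v l) := by
  unfold coeffTerm
  fun_prop

lemma measurable_levelSum (hq : Measurable q) (hα : Measurable α)
    (a : ℕ → (Fin n → ℤ) → ℝ≥0∞) {E : ℕ → (Fin n → ℤ) → Set (Rn n)}
    (hE : ∀ v m, MeasurableSet (E v m)) (k : ℕ) :
    Measurable (levelSum n q α a E k) := by
  unfold levelSum
  refine Measurable.tsum fun v => Measurable.tsum fun m => ?_
  exact measurable_const.mul ((measurable_coeffTerm hq hα v _).mul
    (measurable_const.indicator (hE v m)))

lemma coeffTerm_eq (hq1 : ∀ x, 1 ≤ q x) (v : ℕ) (l : ℝ≥0∞) (x : Rn n) :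
    coeffTerm n q α v l x = ((2 : ℝ≥0∞) ^ ((v : ℝ) * (α x + n / 2)) * l) ^ q x := by
  rw [coeffTerm, ENNReal.mul_rpow_of_nonneg _ _ (by linarith [hq1 x]), ← ENNReal.rpow_mul]

lemma coeffTerm_div (hq1 : ∀ x, 1 ≤ q x) (v : ℕ) (l μ : ℝ≥0∞) (x : Rn n) :
    coeffTerm n q α v (l / μ) x = coeffTerm n q α v l x * μ⁻¹ ^ q x := by
  rw [coeffTerm, coeffTerm, div_eq_mul_inv l, ENNReal.mul_rpow_of_nonneg _ _ (by linarith [hq1 x]),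
    ← mul_assoc]

lemma levelSum_div (hq1 : ∀ x, 1 ≤ q x) (a : ℕ → (Fin n → ℤ) → ℝ≥0∞)
    (E : ℕ → (Fin n → ℤ) → Set (Rn n)) (k : ℕ) (μ : ℝ≥0∞) (x : Rn n) :
    levelSum n q α (fun v m => a v m / μ) E k x = levelSum n q α a E k x * μ⁻¹ ^ q x := by
  simp only [levelSum, ← ENNReal.tsum_mul_right, coeffTerm_div hq1]
  refine tsum_congr fun v => tsum_congr fun m => ?_
  ring

/-- Dividing by a constant `K ≥ 1` gains at least a factor `K⁻¹`, since `q ≥ 1`. -/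
lemma levelSum_div_le (hq1 : ∀ x, 1 ≤ q x) (a : ℕ → (Fin n → ℤ) → ℝ≥0∞)
    (E : ℕ → (Fin n → ℤ) → Set (Rn n)) (k : ℕ) {K : ℝ≥0∞} (hK : 1 ≤ K) (x : Rn n) :
    levelSum n q α (fun v m => a v m / K) E k x ≤ levelSum n q α a E k x * K⁻¹ := by
  rw [levelSum_div hq1]
  gcongr
  calc K⁻¹ ^ q x ≤ K⁻¹ ^ (1 : ℝ) :=
        ENNReal.rpow_le_rpow_of_exponent_ge (ENNReal.inv_le_one.2 hK) (hq1 x)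
    _ = K⁻¹ := ENNReal.rpow_one _

lemma one_le_two_rpow {r : ℝ} (hr : 0 ≤ r) : 1 ≤ (2 : ℝ≥0∞) ^ r := by
  rw [← ENNReal.rpow_zero (x := 2)]
  exact ENNReal.rpow_le_rpow_of_exponent_le (by norm_num) hr

/-- The comparison of the terms at two points of a cube, in terms of bounds on the oscillations of
`α` and `1 / q` there. When the term is not small, `s ^ (q x - q y)` is controlled by the
log-Hölder condition on `1 / q`; otherwise the term is at most `2 ^ (-v)`. -/
lemma coeffTerm_le (hq1 : ∀ x, 1 ≤ q x) {qM Kα Kq : ℝ} (hKα : 0 ≤ Kα) (hKq : 0 ≤ Kq)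
    (v : ℕ) (l : ℝ≥0∞) {x y : Rn n} (hx : q x ≤ qM) (hy : q y ≤ qM)
    (hαxy : (v : ℝ) * |α x - α y| ≤ Kα) (hqxy : (v : ℝ) * |1 / q x - 1 / q y| ≤ Kq)
    (hle : coeffTerm n q α v l y ≤ 1) :
    coeffTerm n q α v l x ≤
      (((2 : ℝ≥0∞) ^ Kα) ^ qM * (2 : ℝ≥0∞) ^ (Kq * qM ^ 2) * ((2 : ℝ≥0∞) ^ Kα) ^ qM) *
        coeffTerm n q α v l y + 2⁻¹ ^ v := by
  have h20 : (2 : ℝ≥0∞) ≠ 0 := by norm_num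
  have h2t : (2 : ℝ≥0∞) ≠ ⊤ := by norm_num
  have hqx := hq1 x
  have hqy := hq1 y
  rw [coeffTerm_eq hq1] at hle ⊢
  rw [coeffTerm_eq hq1]
  set s := (2 : ℝ≥0∞) ^ ((v : ℝ) * (α y + n / 2)) * l with hs
  set A : ℝ≥0∞ := (2 : ℝ≥0∞) ^ Kα with hA
  have hA1 : 1 ≤ A := one_le_two_rpow hKα
  have hAt : A ≠ ⊤ := ENNReal.rpow_ne_top_of_nonneg hKα h2t
  have hs1 : s ≤ 1 := by
    by_contra h
    exact (ENNReal.one_lt_rpow (not_le.1 h) (by linarith)).not_ge hle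
  have hsx : (2 : ℝ≥0∞) ^ ((v : ℝ) * (α x + n / 2)) * l ≤ A * s := by
    rw [hs, ← mul_assoc, hA, ← ENNReal.rpow_add _ _ h20 h2t]
    gcongr
    · norm_num
    · have : (v : ℝ) * (α x - α y) ≤ v * |α x - α y| := by gcongr; exact le_abs_self _
      linarith
  have hzA : A * s ≤ A := mul_le_of_le_one_right' hs1
  refine (ENNReal.rpow_le_rpow hsx (by linarith)).trans ?_
  rcases le_or_gt (A * s) (2⁻¹ ^ v) with hsmall | hbig
  · refine le_add_left ?_
    calc (A * s) ^ q x ≤ (A * s) ^ (1 : ℝ) := by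
          refine ENNReal.rpow_le_rpow_of_exponent_ge (hsmall.trans ?_) hqx
          exact pow_le_one₀ zero_le (by norm_num)
      _ ≤ _ := by rwa [ENNReal.rpow_one]
  · refine le_add_right ?_
    set z := A * s with hz
    have hz0 : z ≠ 0 := (zero_le.trans_lt hbig).ne'
    have hzt : z ≠ ⊤ := ne_top_of_le_ne_top hAt hzA
    have hB1 : 1 ≤ (2 : ℝ≥0∞) ^ (Kq * qM ^ 2) := one_le_two_rpow (by positivity)
    have hAM : 1 ≤ A ^ qM := ENNReal.one_le_rpow hA1 (by linarith)
    have hfac : z ^ (q x - q y) ≤ A ^ qM * (2 : ℝ≥0∞) ^ (Kq * qM ^ 2) := by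
      rcases le_total (q y) (q x) with h | h
      · calc z ^ (q x - q y) ≤ A ^ (q x - q y) := ENNReal.rpow_le_rpow hzA (by linarith)
          _ ≤ A ^ qM := ENNReal.rpow_le_rpow_of_exponent_le hA1 (by linarith)
          _ ≤ _ := le_mul_of_one_le_right' hB1
      · have hinv : z⁻¹ ≤ 2 ^ (v : ℝ) := by
          rw [ENNReal.rpow_natCast, ENNReal.inv_le_iff_inv_le, ENNReal.inv_pow]
          exact hbig.le
        have hexp : (v : ℝ) * (q y - q x) ≤ Kq * qM ^ 2 := by
          have e : q y - q x = (1 / q x - 1 / q y) * (q x * q y) := by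
            field_simp
          have e1 : (v : ℝ) * (1 / q x - 1 / q y) ≤ Kq :=
            le_trans (by gcongr; exact le_abs_self _) hqxy
          rw [e, ← mul_assoc, pow_two]
          gcongr
          linarith
        calc z ^ (q x - q y) = z⁻¹ ^ (q y - q x) := by
              rw [ENNReal.inv_rpow, ← ENNReal.rpow_neg, neg_sub]
          _ ≤ (2 ^ (v : ℝ)) ^ (q y - q x) := ENNReal.rpow_le_rpow hinv (by linarith)
          _ = 2 ^ ((v : ℝ) * (q y - q x)) := by rw [ENNReal.rpow_mul]
          _ ≤ 2 ^ (Kq * qM ^ 2) := ENNReal.rpow_le_rpow_of_exponent_le (by norm_num) hexp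
          _ ≤ _ := le_mul_of_one_le_left' hAM
    calc z ^ q x = z ^ (q x - q y) * z ^ q y := by
          rw [← ENNReal.rpow_add _ _ hz0 hzt, sub_add_cancel]
      _ ≤ (A ^ qM * (2 : ℝ≥0∞) ^ (Kq * qM ^ 2)) * (A ^ qM * s ^ q y) := by
          gcongr
          rw [hz, ENNReal.mul_rpow_of_nonneg _ _ (by linarith)]
          gcongr
      _ = _ := by ring

/-- Integrated form of `coeffTerm_le`: on a cube, the term is controlled by its integral over a
subset `E` of more than half the measure, up to a summable error. -/
lemma setLIntegral_coeffTerm_le (hqm : Measurable q) (hαm : Measurable α)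
    {C : ℝ≥0∞} {v : ℕ} {l : ℝ≥0∞} {Q E : Set (Rn n)}
    (hQt : volume Q ≠ ⊤) (hEQ : E ⊆ Q)
    (hvol : volume Q / 2 < volume E)
    (h : ∀ᵐ y, y ∈ E → ∀ᵐ x, x ∈ Q →
      coeffTerm n q α v l x ≤ C * coeffTerm n q α v l y + 2⁻¹ ^ v) :
    ∫⁻ x in Q, coeffTerm n q α v l x ≤
      2 * C * (∫⁻ x in E, coeffTerm n q α v l x) + 2⁻¹ ^ v * volume Q := by
  set T := coeffTerm n q α v l with hT
  have hTm : Measurable T := measurable_coeffTerm hqm hαm v l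
  have hE0 : volume E ≠ 0 := (zero_le.trans_lt hvol).ne'
  have hEt : volume E ≠ ⊤ := ne_top_of_le_ne_top hQt (measure_mono hEQ)
  have hQE : volume Q ≤ 2 * volume E := by
    rw [mul_comm, ← ENNReal.div_le_iff (by norm_num) (by norm_num)]
    exact hvol.le
  have h1 : ∀ᵐ y, y ∈ E → ∫⁻ x in Q, T x ≤ (C * T y + 2⁻¹ ^ v) * volume Q := by
    filter_upwards [h] with y hy hyE
    rw [← setLIntegral_const]
    exact setLIntegral_mono_ae measurable_const.aemeasurable (hy hyE)
  have h2 : (∫⁻ x in Q, T x) * volume E ≤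
      (2 * C * (∫⁻ x in E, T x) + 2⁻¹ ^ v * volume Q) * volume E := by
    calc (∫⁻ x in Q, T x) * volume E = ∫⁻ _y in E, (∫⁻ x in Q, T x) := by
          rw [setLIntegral_const]
      _ ≤ ∫⁻ y in E, (C * T y + 2⁻¹ ^ v) * volume Q :=
          setLIntegral_mono_ae (by fun_prop) h1
      _ = C * (∫⁻ y in E, T y) * volume Q + 2⁻¹ ^ v * volume Q * volume E := by
          rw [lintegral_mul_const _ (by fun_prop), lintegral_add_right _ measurable_const,
            lintegral_const_mul _ hTm, setLIntegral_const]
          ring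
      _ ≤ C * (∫⁻ y in E, T y) * (2 * volume E) + 2⁻¹ ^ v * volume Q * volume E := by
          gcongr
      _ = _ := by ring
  exact (ENNReal.mul_le_mul_iff_left hE0 hEt).1 h2

/-! ### The two estimates in modular form -/

lemma tsum_indicator_dyadicCube_le (v : ℕ) (x : Rn n) :
    ∑' m, (dyadicCube n v m).indicator (fun _ => (1 : ℝ≥0∞)) x ≤ 1 := by
  by_cases h : ∃ m, x ∈ dyadicCube n v m
  · obtain ⟨m, hm⟩ := h
    rw [tsum_eq_single m fun m' hm' =>
      Set.indicator_of_notMem (fun hx => hm' (dyadicCube_unique hx hm)) _]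
    rw [Set.indicator_of_mem hm]
  · push Not at h
    simp [Set.indicator_of_notMem (h _)]

/-- If the series over the sets `E_{v,m}` is bounded by `1`, then the series over the full cubes,
truncated at the level of a dyadic cube `P`, has mean over `P` bounded by a constant. -/
lemma setLIntegral_levelSum_le (hqm : Measurable q) (hαm : Measurable α) {C : ℝ≥0∞}
    {a : ℕ → (Fin n → ℤ) → ℝ≥0∞} {E : ℕ → (Fin n → ℤ) → Set (Rn n)}
    (hE : ∀ v m, MeasurableSet (E v m)) (hsub : ∀ v m, E v m ⊆ dyadicCube n v m)
    (hvol : ∀ v m, volume (dyadicCube n v m) / 2 < volume (E v m))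
    (hpt : ∀ᵐ y : Rn n, ∀ᵐ x : Rn n, ∀ v m, x ∈ dyadicCube n v m → y ∈ dyadicCube n v m →
      coeffTerm n q α v (a v m) y ≤ 1 →
      coeffTerm n q α v (a v m) x ≤ C * coeffTerm n q α v (a v m) y + 2⁻¹ ^ v)
    (hle : ∀ᵐ x, levelSum n q α a E 0 x ≤ 1) (k : ℕ) (m0 : Fin n → ℤ) :
    ∫⁻ x in dyadicCube n k m0, levelSum n q α a (dyadicCube n) k x ≤
      (2 * C + 2) * volume (dyadicCube n k m0) := by
  set P := dyadicCube n k m0 with hP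
  have hPm : MeasurableSet P := measurableSet_dyadicCube n k m0
  have hTm : ∀ v m, Measurable (coeffTerm n q α v (a v m)) :=
    fun v m => measurable_coeffTerm hqm hαm v _
  have hIm : ∀ {A : Set (Rn n)}, MeasurableSet A →
      Measurable (A.indicator fun _ => (1 : ℝ≥0∞)) := fun hA => measurable_const.indicator hA
  have hTA : ∀ v m (A : Set (Rn n)), (fun x => coeffTerm n q α v (a v m) x *
      A.indicator (fun _ => (1 : ℝ≥0∞)) x) = A.indicator (coeffTerm n q α v (a v m)) := by
    intro v m A
    ext x
    by_cases hx : x ∈ A <;> simp [hx]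
  have hint : ∀ (A : ℕ → (Fin n → ℤ) → Set (Rn n)), (∀ v m, MeasurableSet (A v m)) → ∀ j,
      ∫⁻ x in P, levelSum n q α a A j x = ∑' v, ∑' m, (if j ≤ v then (1 : ℝ≥0∞) else 0) *
        ∫⁻ x in P, (A v m).indicator (coeffTerm n q α v (a v m)) x := by
    intro A hA j
    unfold levelSum
    have hmeas : ∀ v m, Measurable fun x => (if j ≤ v then (1 : ℝ≥0∞) else 0) *
        (coeffTerm n q α v (a v m) x * (A v m).indicator (fun _ => (1 : ℝ≥0∞)) x) :=
      fun v m => measurable_const.mul ((hTm v m).mul (hIm (hA v m)))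
    rw [lintegral_tsum fun v => (Measurable.tsum fun m => hmeas v m).aemeasurable]
    refine tsum_congr fun v => ?_
    rw [lintegral_tsum fun m => (hmeas v m).aemeasurable]
    refine tsum_congr fun m => ?_
    rw [← hTA]
    exact lintegral_const_mul _ ((hTm v m).mul (hIm (hA v m)))
  have hsmall : ∀ᵐ y, ∀ v m, y ∈ E v m → coeffTerm n q α v (a v m) y ≤ 1 := by
    filter_upwards [hle] with y hy v m hyE
    refine le_trans ?_ hy
    unfold levelSum
    refine le_trans ?_ (ENNReal.le_tsum v)
    refine le_trans ?_ (ENNReal.le_tsum m)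
    simp [hyE]
  have hterm : ∀ v m, (if k ≤ v then (1 : ℝ≥0∞) else 0) *
      ∫⁻ x in P, (dyadicCube n v m).indicator (coeffTerm n q α v (a v m)) x ≤
      2 * C * (∫⁻ x in P, (E v m).indicator (coeffTerm n q α v (a v m)) x) +
        2⁻¹ ^ v * ∫⁻ x in P, (dyadicCube n v m).indicator (fun _ => (1 : ℝ≥0∞)) x := by
    intro v m
    have hQm := measurableSet_dyadicCube n v m
    by_cases hkv : k ≤ v
    swap
    · simp [hkv]
    rw [if_pos hkv, one_mul, setLIntegral_indicator hQm, setLIntegral_indicator (hE v m),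
      setLIntegral_indicator hQm, setLIntegral_one]
    rcases (P ∩ dyadicCube n v m).eq_empty_or_nonempty with h | ⟨z, hz1, hz2⟩
    · rw [Set.inter_comm, h]
      simp
    · have hQP : dyadicCube n v m ⊆ P := dyadicCube_subset hkv hz1 hz2
      rw [Set.inter_eq_left.2 hQP, Set.inter_eq_left.2 ((hsub v m).trans hQP)]
      refine setLIntegral_coeffTerm_le hqm hαm (volume_dyadicCube_ne_top n v m) (hsub v m)
        (hvol v m) ?_
      filter_upwards [hpt, hsmall] with y hy hys hyE
      filter_upwards [hy] with x hx hxQ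
      exact hx v m hxQ (hsub v m hyE) (hys v m hyE)
  have hcount : ∀ v, ∑' m, ∫⁻ x in P, (dyadicCube n v m).indicator (fun _ => (1 : ℝ≥0∞)) x ≤
      volume P := by
    intro v
    rw [← lintegral_tsum fun m => (hIm (measurableSet_dyadicCube n v m)).aemeasurable,
      ← setLIntegral_one]
    exact lintegral_mono fun x => tsum_indicator_dyadicCube_le v x
  have hE1 : ∑' v, ∑' m, ∫⁻ x in P, (E v m).indicator (coeffTerm n q α v (a v m)) x ≤
      volume P := by
    have := hint E hE 0
    simp only [zero_le, if_true, one_mul] at this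
    rw [← this, ← setLIntegral_one]
    exact lintegral_mono_ae (ae_restrict_of_ae hle)
  rw [hint _ (measurableSet_dyadicCube n) k]
  calc _ ≤ ∑' v, ∑' m, (2 * C * (∫⁻ x in P, (E v m).indicator (coeffTerm n q α v (a v m)) x) +
        2⁻¹ ^ v * ∫⁻ x in P, (dyadicCube n v m).indicator (fun _ => (1 : ℝ≥0∞)) x) :=
        ENNReal.tsum_le_tsum fun v => ENNReal.tsum_le_tsum fun m => hterm v m
    _ = 2 * C * (∑' v, ∑' m, ∫⁻ x in P, (E v m).indicator (coeffTerm n q α v (a v m)) x) +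
        ∑' v, 2⁻¹ ^ v *
          ∑' m, ∫⁻ x in P, (dyadicCube n v m).indicator (fun _ => (1 : ℝ≥0∞)) x := by
        simp only [ENNReal.tsum_add, ENNReal.tsum_mul_left]
    _ ≤ 2 * C * volume P + ∑' v : ℕ, 2⁻¹ ^ v * volume P := by
        gcongr with v
        exact hcount v
    _ = (2 * C + 2) * volume P := by
        rw [ENNReal.tsum_mul_right, ENNReal.tsum_geometric, ENNReal.one_sub_inv_two, inv_inv,
          add_mul]

/-- A stopping argument: at a point `x`, the series over the sets `F_{v,m}` only involves levels
`v ≥ v₀`, where `v₀` is the first level for which `x` lies in one of these sets, and so it is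
bounded by the series over the cubes truncated at `v₀`. -/
lemma levelSum_zero_le {a : ℕ → (Fin n → ℤ) → ℝ≥0∞} {F : ℕ → (Fin n → ℤ) → Set (Rn n)} {b : ℝ≥0∞}
    (hsub : ∀ v m, F v m ⊆ dyadicCube n v m)
    (hF : ∀ v m, ∀ x ∈ F v m, levelSum n q α a (dyadicCube n) v x ≤ b) (x : Rn n) :
    levelSum n q α a F 0 x ≤ b := by
  classical
  by_cases hx : ∃ v m, x ∈ F v m
  · obtain ⟨m, hm⟩ := Nat.find_spec hx
    refine le_trans ?_ (hF _ _ _ hm)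
    unfold levelSum
    refine ENNReal.tsum_le_tsum fun v => ENNReal.tsum_le_tsum fun m' => ?_
    by_cases hv : Nat.find hx ≤ v
    · rw [if_pos (zero_le (a := v)), if_pos hv]
      gcongr
      exact hsub v m'
    · have hnot : x ∉ F v m' := fun hmem => Nat.find_min hx (not_le.1 hv) ⟨m', hmem⟩
      rw [Set.indicator_of_notMem hnot]
      simp
  · push Not at hx
    have : levelSum n q α a F 0 x = 0 := by
      simp only [levelSum, Set.indicator_of_notMem (hx _ _), mul_zero, tsum_zero]
    rw [this]
    exact zero_le

/-- If the truncated series have means at most `1` over all dyadic cubes, the sets where the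
series truncated at the level of the cube is at most `3` have more than half of the measure
(Chebyshev), and the series over these sets is at most `3`. -/
lemma exists_sets_levelSum_le (hqm : Measurable q) (hαm : Measurable α)
    {a : ℕ → (Fin n → ℤ) → ℝ≥0∞}
    (h : ∀ k m0, ∫⁻ x in dyadicCube n k m0, levelSum n q α a (dyadicCube n) k x ≤
      volume (dyadicCube n k m0)) :
    ∃ E : ℕ → (Fin n → ℤ) → Set (Rn n),
      (∀ v m, MeasurableSet (E v m)) ∧ (∀ v m, E v m ⊆ dyadicCube n v m) ∧
      (∀ v m, volume (dyadicCube n v m) / 2 < volume (E v m)) ∧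
      ∀ x, levelSum n q α a E 0 x ≤ 3 := by
  have hSm : ∀ k, Measurable (levelSum n q α a (dyadicCube n) k) := fun k =>
    measurable_levelSum hqm hαm a (measurableSet_dyadicCube n) k
  refine ⟨fun v m => dyadicCube n v m ∩ {x | levelSum n q α a (dyadicCube n) v x ≤ 3},
    fun v m => (measurableSet_dyadicCube n v m).inter (measurableSet_le (hSm v) measurable_const),
    fun v m => Set.inter_subset_left, fun v m => ?_, fun x => ?_⟩
  · set Q := dyadicCube n v m with hQ
    set G := {x : Rn n | levelSum n q α a (dyadicCube n) v x ≤ 3} with hG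
    have hGm : MeasurableSet G := measurableSet_le (hSm v) measurable_const
    have hQt : volume Q ≠ ⊤ := volume_dyadicCube_ne_top n v m
    have hQ0 : volume Q ≠ 0 := volume_dyadicCube_ne_zero n v m
    have hcheb : 3 * volume (Q \ G) ≤ volume Q := by
      calc 3 * volume (Q \ G) = ∫⁻ _x in Q \ G, 3 := by rw [setLIntegral_const]
        _ ≤ ∫⁻ x in Q \ G, levelSum n q α a (dyadicCube n) v x :=
            setLIntegral_mono (hSm v) fun x hx => (not_le.1 hx.2).le
        _ ≤ ∫⁻ x in Q, levelSum n q α a (dyadicCube n) v x :=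
            lintegral_mono_set Set.sdiff_subset
        _ ≤ _ := h v m
    have hsplit : volume (Q ∩ G) + volume (Q \ G) = volume Q := measure_inter_add_sdiff Q hGm
    have ht1 : volume (Q ∩ G) ≠ ⊤ := ne_top_of_le_ne_top hQt (measure_mono Set.inter_subset_left)
    have ht2 : volume (Q \ G) ≠ ⊤ := ne_top_of_le_ne_top hQt (measure_mono Set.sdiff_subset)
    rw [← hsplit] at hcheb hQ0 ⊢
    generalize volume (Q ∩ G) = A at *
    generalize volume (Q \ G) = B at *
    lift A to NNReal using ht1
    lift B to NNReal using ht2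
    have hc : 3 * B ≤ A + B := by exact_mod_cast hcheb
    have h0 : A + B ≠ 0 := by exact_mod_cast hQ0
    rw [ENNReal.div_lt_iff (by norm_num) (by norm_num)]
    have : A + B < A * 2 := by
      rw [← NNReal.coe_lt_coe]
      have h0' : 0 < A + B := pos_iff_ne_zero.2 h0
      rw [← NNReal.coe_le_coe] at hc
      rw [← NNReal.coe_lt_coe] at h0'
      push_cast at *
      linarith
    exact_mod_cast this
  · exact levelSum_zero_le (fun v m => Set.inter_subset_left) (fun v m x hx => hx.2) x

/-! ### From norms to modulars -/

lemma btNorm_eq (lam : ℕ → (Fin n → ℤ) → ℂ) :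
    btNorm n q α lam = ⨆ (k : ℕ) (m0 : Fin n → ℤ),
      luxNorm n q ((dyadicCube n k m0).indicator fun x => ((2 : ℝ≥0∞) ^ ((k : ℝ) * n) *
        levelSum n q α (fun v m => ENNReal.ofReal ‖lam v m‖) (dyadicCube n) k x) ^ (1 / q x)) := by
  simp only [btNorm, levelSum, coeffTerm, mul_assoc]

lemma eNormInf_eq (lam : ℕ → (Fin n → ℤ) → ℂ) (E : ℕ → (Fin n → ℤ) → Set (Rn n)) :
    eNormInf n q α lam E = essSup (fun x =>
      levelSum n q α (fun v m => ENNReal.ofReal ‖lam v m‖) E 0 x ^ (1 / q x)) volume := by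
  simp only [eNormInf, levelSum, coeffTerm, zero_le, if_true, one_mul]

/-- The modular of the functions defining `btNorm`, rescaled by `μ`: the roots cancel the exponent,
and `μ` is absorbed into the coefficients. -/
lemma modularVE_eq (hq1 : ∀ x, 1 ≤ q x) (hqm : Measurable q) (hαm : Measurable α)
    (a : ℕ → (Fin n → ℤ) → ℝ≥0∞) (k : ℕ) (m0 : Fin n → ℤ) (μ : ℝ≥0∞) :
    modularVE n q (fun x => (dyadicCube n k m0).indicator (fun x => ((2 : ℝ≥0∞) ^ ((k : ℝ) * n) *
        levelSum n q α a (dyadicCube n) k x) ^ (1 / q x)) x / μ) =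
      (2 : ℝ≥0∞) ^ ((k : ℝ) * n) * ∫⁻ x in dyadicCube n k m0,
        levelSum n q α (fun v m => a v m / μ) (dyadicCube n) k x := by
  rw [modularVE, ← lintegral_const_mul _ (measurable_levelSum hqm hαm _
    (measurableSet_dyadicCube n) k), ← lintegral_indicator (measurableSet_dyadicCube n k m0)]
  refine lintegral_congr fun x => ?_
  have hq0 : 0 < q x := by linarith [hq1 x]
  by_cases hx : x ∈ dyadicCube n k m0
  · rw [Set.indicator_of_mem hx, Set.indicator_of_mem hx, levelSum_div hq1, div_eq_mul_inv,
      ENNReal.mul_rpow_of_nonneg _ _ hq0.le, ← ENNReal.rpow_mul, one_div_mul_cancel hq0.ne',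
      ENNReal.rpow_one, mul_assoc]
  · rw [Set.indicator_of_notMem hx, Set.indicator_of_notMem hx, ENNReal.zero_div,
      ENNReal.zero_rpow_of_pos hq0]

lemma modularVE_le_one_of_luxNorm_lt (hq1 : ∀ x, 1 ≤ q x) {f : Rn n → ℝ≥0∞} {μ : ℝ≥0∞}
    (h : luxNorm n q f < μ) : modularVE n q (fun x => f x / μ) ≤ 1 := by
  obtain ⟨ν, ⟨-, hν⟩, hνμ⟩ := sInf_lt_iff.1 h
  refine le_trans (lintegral_mono fun x => ?_) hν
  exact ENNReal.rpow_le_rpow (ENNReal.div_le_div_left hνμ.le _) (by linarith [hq1 x])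

/-- Above the sequence-space norm, the rescaled truncated series has mean at most `1` on every
cube. -/
lemma setLIntegral_levelSum_le_of_btNorm_lt (hq1 : ∀ x, 1 ≤ q x) (hqm : Measurable q)
    (hαm : Measurable α) {lam : ℕ → (Fin n → ℤ) → ℂ} {μ : ℝ≥0∞} (h : btNorm n q α lam < μ)
    (k : ℕ) (m0 : Fin n → ℤ) :
    ∫⁻ x in dyadicCube n k m0,
      levelSum n q α (fun v m => ENNReal.ofReal ‖lam v m‖ / μ) (dyadicCube n) k x ≤
        volume (dyadicCube n k m0) := by
  rw [btNorm_eq] at h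
  have h1 := modularVE_le_one_of_luxNorm_lt hq1
    ((le_iSup₂ (f := fun (k : ℕ) (m0 : Fin n → ℤ) =>
      luxNorm n q ((dyadicCube n k m0).indicator fun x => ((2 : ℝ≥0∞) ^ ((k : ℝ) * n) *
        levelSum n q α (fun v m => ENNReal.ofReal ‖lam v m‖) (dyadicCube n) k x) ^ (1 / q x)))
      k m0).trans_lt h)
  rw [modularVE_eq hq1 hqm hαm, ← two_rpow_mul_volume_dyadicCube n k m0] at h1
  exact (ENNReal.mul_le_mul_iff_right (ENNReal.rpow_pos (by norm_num) (by norm_num)).ne'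
    (ENNReal.rpow_ne_top_of_ne_zero (by norm_num) (by norm_num))).1 h1

lemma btNorm_le (hq1 : ∀ x, 1 ≤ q x) (hqm : Measurable q)
    (hαm : Measurable α) {lam : ℕ → (Fin n → ℤ) → ℂ} {μ : ℝ≥0∞} (hμ : 0 < μ)
    (h : ∀ k m0, ∫⁻ x in dyadicCube n k m0,
      levelSum n q α (fun v m => ENNReal.ofReal ‖lam v m‖ / μ) (dyadicCube n) k x ≤
        volume (dyadicCube n k m0)) :
    btNorm n q α lam ≤ μ := by
  rw [btNorm_eq]
  refine iSup₂_le fun k m0 => sInf_le ⟨hμ, ?_⟩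
  rw [modularVE_eq hq1 hqm hαm, ← two_rpow_mul_volume_dyadicCube n k m0]
  gcongr
  exact h k m0

/-- `L^∞` bounds for the roots of the series amount to bounds by `1` for the rescaled series. -/
lemma levelSum_div_le_one_iff (hq1 : ∀ x, 1 ≤ q x) (a : ℕ → (Fin n → ℤ) → ℝ≥0∞)
    (E : ℕ → (Fin n → ℤ) → Set (Rn n)) {μ : ℝ≥0∞} (h0 : μ ≠ 0) (ht : μ ≠ ⊤) (x : Rn n) :
    levelSum n q α (fun v m => a v m / μ) E 0 x ≤ 1 ↔
      levelSum n q α a E 0 x ^ (1 / q x) ≤ μ := by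
  have hq0 : 0 < q x := by linarith [hq1 x]
  rw [levelSum_div hq1, ENNReal.inv_rpow, ← div_eq_mul_inv,
    ENNReal.div_le_iff (ENNReal.rpow_pos (pos_iff_ne_zero.2 h0) ht).ne'
      (ENNReal.rpow_ne_top_of_nonneg hq0.le ht), one_mul, one_div,
    ENNReal.rpow_inv_le_iff hq0]

/-- The first estimate: the modular bound with constant `2 C + 2` becomes a bound by `1` after
dividing by `K ≥ 2 C + 2`. -/
lemma btNorm_le_eNormInf (hq1 : ∀ x, 1 ≤ q x) (hqm : Measurable q) (hαm : Measurable α)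
    {C K : ℝ≥0∞} (hK : 2 * C + 2 ≤ K) (hKt : K ≠ ⊤)
    (hpt : ∀ᵐ y : Rn n, ∀ᵐ x : Rn n, ∀ v m l, x ∈ dyadicCube n v m → y ∈ dyadicCube n v m →
      coeffTerm n q α v l y ≤ 1 →
      coeffTerm n q α v l x ≤ C * coeffTerm n q α v l y + 2⁻¹ ^ v)
    (lam : ℕ → (Fin n → ℤ) → ℂ) {E : ℕ → (Fin n → ℤ) → Set (Rn n)}
    (hE : ∀ v m, MeasurableSet (E v m)) (hsub : ∀ v m, E v m ⊆ dyadicCube n v m)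
    (hvol : ∀ v m, volume (dyadicCube n v m) / 2 < volume (E v m)) :
    btNorm n q α lam ≤ K * eNormInf n q α lam E := by
  have hK1 : 1 ≤ K := le_trans (le_add_left (by norm_num)) hK
  have hK0 : K ≠ 0 := (zero_lt_one.trans_le hK1).ne'
  rw [mul_comm, ← ENNReal.div_le_iff hK0 hKt]
  refine le_of_forall_gt_imp_ge_of_dense fun μ hμ => ?_
  rcases eq_or_ne μ ⊤ with rfl | hμt
  · exact le_top
  have hμ0 : μ ≠ 0 := (zero_le.trans_lt hμ).ne'
  rw [ENNReal.div_le_iff hK0 hKt]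
  refine btNorm_le hq1 hqm hαm (ENNReal.mul_pos hμ0 hK0) fun k m0 => ?_
  have hle : ∀ᵐ x, levelSum n q α (fun v m => ENNReal.ofReal ‖lam v m‖ / μ) E 0 x ≤ 1 := by
    rw [eNormInf_eq] at hμ
    filter_upwards [ENNReal.ae_le_essSup (μ := volume) (fun x =>
      levelSum n q α (fun v m => ENNReal.ofReal ‖lam v m‖) E 0 x ^ (1 / q x))] with x hx
    exact (levelSum_div_le_one_iff hq1 _ E hμ0 hμt x).2 (hx.trans hμ.le)
  have hmain := setLIntegral_levelSum_le hqm hαm hE hsub hvol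
    (by filter_upwards [hpt] with y hy
        filter_upwards [hy] with x hx v m
        exact hx v m _) hle k m0
  have hdd : (fun v m => ENNReal.ofReal ‖lam v m‖ / (μ * K)) =
      fun v m => ENNReal.ofReal ‖lam v m‖ / μ / K := by
    funext v m
    rw [div_eq_mul_inv, div_eq_mul_inv, div_eq_mul_inv,
      ENNReal.mul_inv (Or.inl hμ0) (Or.inl hμt), mul_assoc]
  rw [hdd]
  calc _ ≤ ∫⁻ x in dyadicCube n k m0,
        levelSum n q α (fun v m => ENNReal.ofReal ‖lam v m‖ / μ) (dyadicCube n) k x * K⁻¹ :=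
        lintegral_mono fun x => levelSum_div_le hq1 _ _ k hK1 x
    _ ≤ (K * volume (dyadicCube n k m0)) * K⁻¹ := by
        rw [lintegral_mul_const _ (measurable_levelSum hqm hαm _ (measurableSet_dyadicCube n) k)]
        gcongr
        exact hmain.trans (by gcongr)
    _ = volume (dyadicCube n k m0) := by
        rw [mul_comm K, mul_assoc, ENNReal.mul_inv_cancel hK0 hKt, mul_one]

/-- If the sequence-space norm vanishes, so does the series over all cubes: rescaling by `ε`
shows that its integrals over the unit cubes are `O(ε)`. -/
lemma levelSum_ae_eq_zero (hq1 : ∀ x, 1 ≤ q x) (hqm : Measurable q) (hαm : Measurable α)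
    {lam : ℕ → (Fin n → ℤ) → ℂ} (h : btNorm n q α lam = 0) :
    ∀ᵐ x, levelSum n q α (fun v m => ENNReal.ofReal ‖lam v m‖) (dyadicCube n) 0 x = 0 := by
  set a : ℕ → (Fin n → ℤ) → ℝ≥0∞ := fun v m => ENNReal.ofReal ‖lam v m‖ with ha
  have hm := measurable_levelSum hqm hαm a (measurableSet_dyadicCube n) 0
  have key : ∀ m0, ∫⁻ x in dyadicCube n 0 m0, levelSum n q α a (dyadicCube n) 0 x = 0 := by
    intro m0
    by_contra hne
    obtain ⟨δ, hδ, hδlt⟩ := ENNReal.exists_nnreal_pos_mul_lt (volume_dyadicCube_ne_top n 0 m0) hne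
    set ε : ℝ≥0∞ := min δ 1 with hε
    have hε0 : ε ≠ 0 := by
      rw [hε]
      exact (lt_min (by exact_mod_cast hδ) one_pos).ne'
    have hεt : ε ≠ ⊤ := ne_top_of_le_ne_top ENNReal.one_ne_top (min_le_right _ _)
    have h1 := setLIntegral_levelSum_le_of_btNorm_lt hq1 hqm hαm (μ := ε)
      (h.trans_lt (pos_iff_ne_zero.2 hε0)) 0 m0
    have h2 : ∀ x, levelSum n q α a (dyadicCube n) 0 x ≤
        levelSum n q α (fun v m => a v m / ε) (dyadicCube n) 0 x * ε := by
      intro x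
      have := levelSum_div_le (α := α) hq1 (fun v m => a v m / ε) (dyadicCube n) 0
        (ENNReal.one_le_inv.2 (min_le_right (δ : ℝ≥0∞) 1)) x
      rw [← hε, inv_inv] at this
      have e : (fun v m => a v m / ε / ε⁻¹) = a := by
        funext v m
        rw [div_eq_mul_inv, inv_inv, ENNReal.div_mul_cancel hε0 hεt]
      rwa [e] at this
    refine hδlt.not_ge ?_
    calc _ ≤ ∫⁻ x in dyadicCube n 0 m0,
          levelSum n q α (fun v m => a v m / ε) (dyadicCube n) 0 x * ε := lintegral_mono h2
      _ ≤ volume (dyadicCube n 0 m0) * ε := by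
          rw [lintegral_mul_const _
            (measurable_levelSum hqm hαm _ (measurableSet_dyadicCube n) 0)]
          gcongr
      _ ≤ _ := by
          rw [mul_comm]
          gcongr
          exact min_le_left _ _
  have hall : ∀ᵐ x, ∀ m0, x ∈ dyadicCube n 0 m0 → levelSum n q α a (dyadicCube n) 0 x = 0 := by
    rw [ae_all_iff]
    intro m0
    have := (lintegral_eq_zero_iff hm).1 (key m0)
    exact (ae_restrict_iff' (measurableSet_dyadicCube n 0 m0)).1 this
  filter_upwards [hall] with x hx
  refine hx (fun i => ⌊x i⌋) fun i => ?_
  rw [pow_zero, one_mul]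
  exact ⟨Int.floor_le _, Int.lt_floor_add_one _⟩

/-- The second estimate: the sets of `exists_sets_levelSum_le` for the coefficients divided by
twice the norm. -/
lemma exists_sets_eNormInf_le (hq1 : ∀ x, 1 ≤ q x) (hqm : Measurable q) (hαm : Measurable α)
    {lam : ℕ → (Fin n → ℤ) → ℂ} (hfin : btNorm n q α lam < ⊤) :
    ∃ E : ℕ → (Fin n → ℤ) → Set (Rn n),
      (∀ v m, MeasurableSet (E v m)) ∧ (∀ v m, E v m ⊆ dyadicCube n v m) ∧
      (∀ v m, volume (dyadicCube n v m) / 2 < volume (E v m)) ∧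
      eNormInf n q α lam E ≤ 6 * btNorm n q α lam := by
  rcases eq_or_ne (btNorm n q α lam) 0 with h0 | h0
  · refine ⟨dyadicCube n, measurableSet_dyadicCube n, fun v m => subset_rfl, fun v m =>
      ENNReal.half_lt_self (volume_dyadicCube_ne_zero n v m) (volume_dyadicCube_ne_top n v m), ?_⟩
    rw [eNormInf_eq, h0, mul_zero]
    refine essSup_le_of_ae_le 0 ?_
    filter_upwards [levelSum_ae_eq_zero hq1 hqm hαm h0] with x hx
    have : 0 < 1 / q x := one_div_pos.2 (by linarith [hq1 x])
    rw [hx, ENNReal.zero_rpow_of_pos this]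
  · set μ := 2 * btNorm n q α lam with hμ
    have hlt : btNorm n q α lam < μ := by
      have := ENNReal.lt_add_right hfin.ne h0
      rwa [← two_mul] at this
    have hμ0 : μ ≠ 0 := (zero_le.trans_lt hlt).ne'
    have hμt : μ ≠ ⊤ := ENNReal.mul_ne_top (by norm_num) hfin.ne
    obtain ⟨E, hE, hsub, hvol, hle⟩ := exists_sets_levelSum_le hqm hαm
      (setLIntegral_levelSum_le_of_btNorm_lt hq1 hqm hαm hlt)
    refine ⟨E, hE, hsub, hvol, ?_⟩
    have h6 : 6 * btNorm n q α lam = μ * 3 := by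
      rw [hμ]
      ring
    rw [eNormInf_eq, h6]
    refine essSup_le_of_ae_le _ (Filter.Eventually.of_forall fun x => ?_)
    rw [← levelSum_div_le_one_iff hq1 _ E (mul_ne_zero hμ0 (by norm_num))
      (ENNReal.mul_ne_top hμt (by norm_num))]
    have hdd : (fun v m => ENNReal.ofReal ‖lam v m‖ / (μ * 3)) =
        fun v m => ENNReal.ofReal ‖lam v m‖ / μ / 3 := by
      funext v m
      rw [div_eq_mul_inv, div_eq_mul_inv, div_eq_mul_inv,
        ENNReal.mul_inv (Or.inl hμ0) (Or.inl hμt), mul_assoc]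
    rw [hdd]
    calc _ ≤ levelSum n q α (fun v m => ENNReal.ofReal ‖lam v m‖ / μ) E 0 x * 3⁻¹ :=
          levelSum_div_le hq1 _ E 0 (by norm_num) x
      _ ≤ 3 * 3⁻¹ := by
          gcongr
          exact hle x
      _ = 1 := ENNReal.mul_inv_cancel (by norm_num) (by norm_num)

end


/-- for `α ∈ C_loc^log` and `q ∈ 𝒫^log` with `1 < q⁻ ≤ q⁺ < ∞`:
(i) for any collection of measurable sets `E_{Q_{v,m}} ⊆ Q_{v,m}` with
`|E_{Q_{v,m}}| > |Q_{v,m}|/2`, `‖λ‖_{b̃} ≤ c₁ ‖(Σ ... χ_E)^{1/q}‖_∞`; and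
(ii) if `‖λ‖_{b̃} < ∞` then some such collection satisfies
`‖(Σ ... χ_E)^{1/q}‖_∞ ≤ c₂ ‖λ‖_{b̃}`. -/
theorem statement9 (n : ℕ) (hn : 1 ≤ n) (q α : Rn n → ℝ)
    (hqmeas : Measurable q) (hαmeas : Measurable α)
    (hα : ∃ c : ℝ, 0 < c ∧ LocLogHolderWith n c α)
    (hq1 : ∀ x, 1 ≤ q x)
    (hqlog : GlobLogHolder n fun x => 1 / q x)
    (qm qM : ℝ) (hqm : 1 < qm)
    (hq : ∀ᵐ x ∂(volume : Measure (Rn n)), qm ≤ q x ∧ q x ≤ qM) :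
    ∃ c₁ c₂ : ℝ, 0 < c₁ ∧ 0 < c₂ ∧
      ∀ lam : ℕ → (Fin n → ℤ) → ℂ,
        (∀ E : ℕ → (Fin n → ℤ) → Set (Rn n),
          (∀ v m, MeasurableSet (E v m)) → (∀ v m, E v m ⊆ dyadicCube n v m) →
          (∀ v m, volume (dyadicCube n v m) / 2 < volume (E v m)) →
          btNorm n q α lam ≤ ENNReal.ofReal c₁ * eNormInf n q α lam E) ∧
        (btNorm n q α lam < ⊤ →
          ∃ E : ℕ → (Fin n → ℤ) → Set (Rn n),
            (∀ v m, MeasurableSet (E v m)) ∧ (∀ v m, E v m ⊆ dyadicCube n v m) ∧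
            (∀ v m, volume (dyadicCube n v m) / 2 < volume (E v m)) ∧
            eNormInf n q α lam E ≤ ENNReal.ofReal c₂ * btNorm n q α lam) := by
  obtain ⟨cα, hcα, hαlog⟩ := hα
  obtain ⟨⟨cq, hcq, hqlog'⟩, -⟩ := hqlog
  obtain ⟨Kα, hKα, hoscα⟩ := exists_osc_bound hn hcα hαlog
  obtain ⟨Kq, hKq, hoscq⟩ := exists_osc_bound hn hcq hqlog'
  set C : ℝ≥0∞ :=
    ((2 : ℝ≥0∞) ^ Kα) ^ qM * (2 : ℝ≥0∞) ^ (Kq * qM ^ 2) * ((2 : ℝ≥0∞) ^ Kα) ^ qM with hC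
  have h2Kα : (2 : ℝ≥0∞) ^ Kα ≠ ⊤ := ENNReal.rpow_ne_top_of_nonneg hKα (by norm_num)
  have h2Kα0 : (2 : ℝ≥0∞) ^ Kα ≠ 0 := (zero_lt_one.trans_le (one_le_two_rpow hKα)).ne'
  have hCt : C ≠ ⊤ := ENNReal.mul_ne_top (ENNReal.mul_ne_top
    (ENNReal.rpow_ne_top_of_ne_zero h2Kα0 h2Kα)
    (ENNReal.rpow_ne_top_of_nonneg (by positivity) (by norm_num)))
    (ENNReal.rpow_ne_top_of_ne_zero h2Kα0 h2Kα)
  have hKt : 2 * C + 2 ≠ ⊤ :=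
    ENNReal.add_ne_top.2 ⟨ENNReal.mul_ne_top (by norm_num) hCt, by norm_num⟩
  have hpt : ∀ᵐ y : Rn n, ∀ᵐ x : Rn n, ∀ v m l, x ∈ dyadicCube n v m → y ∈ dyadicCube n v m →
      coeffTerm n q α v l y ≤ 1 →
      coeffTerm n q α v l x ≤ C * coeffTerm n q α v l y + 2⁻¹ ^ v := by
    filter_upwards [hq] with y hy
    filter_upwards [hq] with x hx v m l hxQ hyQ hle
    exact coeffTerm_le hq1 hKα hKq v l hx.2 hy.2 (hoscα v m x hxQ y hyQ)
      (hoscq v m x hxQ y hyQ) hle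
  refine ⟨(2 * C + 2).toReal, 6, ENNReal.toReal_pos (by simp) hKt, by norm_num, fun lam => ⟨?_, ?_⟩⟩
  · intro E hE hsub hvol
    rw [ENNReal.ofReal_toReal hKt]
    exact btNorm_le_eNormInf hq1 hqmeas hαmeas le_rfl hKt hpt lam hE hsub hvol
  · intro hfin
    have h6 : ENNReal.ofReal 6 = 6 := by norm_num
    rw [h6]
    exact exists_sets_eNormInf_le hq1 hqmeas hαmeas hfin

end
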